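/- Let Φ be a quantum channel on n×n complex matrices with Kraus operators {K_j}, and let x, x⊥ ∈ ℂⁿ be orthogonal unit vectors such that Φ(x⊥ x⊥†) Z x = 0 and Φ(x x†) Z x = 0 for every n×n matrix Z in the Hilbert–Schmidt orthogonal complement K_Φ^⊥ of span{K_j}. If additionally Φ(x x†) ≠ Φ(x⊥ x⊥†), then there exists λ ∈ (0,1) such that Φ ∘ Ψ_{λ,x,x⊥}^{-1} is completely positive and rank C(Φ ∘ Ψ_{λ,x,x⊥}^{-1}) < rank C(Φ), i.e. the Kraus rank strictly decreases. -/

import Mathlib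

open Matrix Kronecker
open scoped ComplexOrder

noncomputable section

/-- The linear map `ρ ↦ A ρ Bᴴ`. -/
def sandwich₂ {m n : ℕ} (A B : Matrix (Fin m) (Fin n) ℂ) :
    Matrix (Fin n) (Fin n) ℂ →ₗ[ℂ] Matrix (Fin m) (Fin m) ℂ where
  toFun ρ := A * ρ * Bᴴ
  map_add' X Y := by simp [Matrix.mul_add, Matrix.add_mul]
  map_smul' c X := by simp [Matrix.mul_smul, Matrix.smul_mul]

/-- The linear map `ρ ↦ A ρ Aᴴ`. -/
def sandwich {m n : ℕ} (A : Matrix (Fin m) (Fin n) ℂ) :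
    Matrix (Fin n) (Fin n) ℂ →ₗ[ℂ] Matrix (Fin m) (Fin m) ℂ :=
  sandwich₂ A A

/-- The Choi matrix `C(Φ) = ∑ⱼₖ Eⱼₖ ⊗ Φ(Eⱼₖ)`. -/
def Choi {n m : ℕ} (Φ : Matrix (Fin n) (Fin n) ℂ →ₗ[ℂ] Matrix (Fin m) (Fin m) ℂ) :
    Matrix (Fin n × Fin m) (Fin n × Fin m) ℂ :=
  ∑ j : Fin n, ∑ k : Fin n,
    (Matrix.single j k (1 : ℂ)) ⊗ₖ Φ (Matrix.single j k (1 : ℂ))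

/-- Vectorization: `vec X = ∑ⱼ eⱼ ⊗ X eⱼ`, i.e. `(vec X) (j, i) = X i j`. -/
def vec {m n : ℕ} (X : Matrix (Fin m) (Fin n) ℂ) : Fin n × Fin m → ℂ :=
  fun p => X p.2 p.1

/-- Complete positivity (via the Choi characterization). -/
def IsCP {n : ℕ} (Φ : Matrix (Fin n) (Fin n) ℂ →ₗ[ℂ] Matrix (Fin n) (Fin n) ℂ) : Prop :=
  (Choi Φ).PosSemidef

/-- Trace preservation. -/
def IsTP {n : ℕ} (Φ : Matrix (Fin n) (Fin n) ℂ →ₗ[ℂ] Matrix (Fin n) (Fin n) ℂ) : Prop :=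
  ∀ ρ, (Φ ρ).trace = ρ.trace

/-- Quantum channel: completely positive and trace preserving. -/
def IsChannel {n : ℕ} (Φ : Matrix (Fin n) (Fin n) ℂ →ₗ[ℂ] Matrix (Fin n) (Fin n) ℂ) : Prop :=
  IsCP Φ ∧ IsTP Φ

/-- `K_λ = 1 - (1 - √(1-λ)) x x†`. -/
def Kmat {n : ℕ} (lam : ℝ) (x : Fin n → ℂ) : Matrix (Fin n) (Fin n) ℂ :=
  1 - ((1 - Real.sqrt (1 - lam) : ℝ) : ℂ) • Matrix.vecMulVec x (star x)

/-- `L_λ = √λ y x†`. -/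
def Lmat {n : ℕ} (lam : ℝ) (x y : Fin n → ℂ) : Matrix (Fin n) (Fin n) ℂ :=
  ((Real.sqrt lam : ℝ) : ℂ) • Matrix.vecMulVec y (star x)

/-- The elementary channel `Ψ_{λ,x,y} = K_λ (·) K_λ† + L_λ (·) L_λ†`. -/
def Psi {n : ℕ} (lam : ℝ) (x y : Fin n → ℂ) :
    Matrix (Fin n) (Fin n) ℂ →ₗ[ℂ] Matrix (Fin n) (Fin n) ℂ :=
  sandwich (Kmat lam x) + sandwich (Lmat lam x y)

/-- For `λ ∈ [0,1)` and `⟨x,y⟩ = 0`, the inverse of `Ψ_{λ,x,y}`: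
`Ψ_{λ,x,y}⁻¹ = K_λ⁻¹ (·) K_λ⁻¹ - (1-λ)⁻¹ L_λ (·) L_λ†`. -/
def PsiInv {n : ℕ} (lam : ℝ) (x y : Fin n → ℂ) :
    Matrix (Fin n) (Fin n) ℂ →ₗ[ℂ] Matrix (Fin n) (Fin n) ℂ :=
  sandwich (Kmat lam x)⁻¹ - (((1 - lam)⁻¹ : ℝ) : ℂ) • sandwich (Lmat lam x y)

/-- `Φ` is conjugation by a unitary. -/
def IsUnitaryConj {n : ℕ} (Φ : Matrix (Fin n) (Fin n) ℂ →ₗ[ℂ] Matrix (Fin n) (Fin n) ℂ) : Prop :=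
  ∃ U ∈ Matrix.unitaryGroup (Fin n) ℂ, ∀ ρ, Φ ρ = U * ρ * Uᴴ

/-- A quantum channel is divisible if it factors into two channels neither of which is
a unitary conjugation. -/
def Divisible {n : ℕ} (Φ : Matrix (Fin n) (Fin n) ℂ →ₗ[ℂ] Matrix (Fin n) (Fin n) ℂ) : Prop :=
  ∃ Φ₁ Φ₂ : Matrix (Fin n) (Fin n) ℂ →ₗ[ℂ] Matrix (Fin n) (Fin n) ℂ,
    IsChannel Φ₁ ∧ IsChannel Φ₂ ∧ Φ = Φ₁ ∘ₗ Φ₂ ∧ ¬ IsUnitaryConj Φ₁ ∧ ¬ IsUnitaryConj Φ₂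

/-- `Z = conj(x) conj(x⊥)† ⊗ 1`. -/
def Zmat {n : ℕ} (x xp : Fin n → ℂ) : Matrix (Fin n × Fin n) (Fin n × Fin n) ℂ :=
  (Matrix.vecMulVec (star x) xp) ⊗ₖ (1 : Matrix (Fin n) (Fin n) ℂ)

/-! A completely positive `Φ` is treated through its Choi matrix. Since `x† K_λ = √(1-λ) x†`, the
map `Ψ_λ⁻¹` equals `(id - λ S) ∘ (ρ ↦ K_λ⁻¹ ρ K_λ⁻¹†)` with `S ρ = (x† ρ x) x⊥ x⊥†`, so that
`C(Φ ∘ Ψ_λ⁻¹)` is congruent to `C(Φ) - λ C(Φ ∘ S)`. The kernel of `C(Φ)` consists of the vectorized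
elements of `K_Φ^⊥`, and `C(Φ ∘ S) = x̄ xᵀ ⊗ Φ(x⊥ x⊥†)`, so the criterion says that this kernel is
contained in that of `C(Φ ∘ S)`. Hence small multiples of `C(Φ ∘ S)` can be subtracted from `C(Φ)`,
and at the largest admissible `λ` a new kernel vector appears. That `λ` is less than `1`, for
otherwise `Φ - Φ ∘ S` would be completely positive, and evaluating it at `x x†` would give
`Φ(x⊥ x⊥†) ≤ Φ(x x†)`; as their traces agree, this would force equality. -/

theorem exists_comp_eq_of_ker_le_ker {𝕜 V₁ V₂ V₃ : Type*} [DivisionRing 𝕜] [AddCommGroup V₁]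
    [Module 𝕜 V₁] [AddCommGroup V₂] [Module 𝕜 V₂] [AddCommGroup V₃] [Module 𝕜 V₃]
    (f : V₁ →ₗ[𝕜] V₂) (g : V₁ →ₗ[𝕜] V₃) (h : LinearMap.ker f ≤ LinearMap.ker g) :
    ∃ k : V₂ →ₗ[𝕜] V₃, k ∘ₗ f = g := by
  obtain ⟨l, hl⟩ := LinearMap.exists_leftInverse_of_injective
    ((LinearMap.ker f).liftQ f le_rfl) (Submodule.ker_liftQ_eq_bot' _ _ rfl)
  refine ⟨(LinearMap.ker f).liftQ g h ∘ₗ l, ?_⟩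
  calc ((LinearMap.ker f).liftQ g h ∘ₗ l) ∘ₗ f
      = (LinearMap.ker f).liftQ g h ∘ₗ (l ∘ₗ (LinearMap.ker f).liftQ f le_rfl) ∘ₗ
          (LinearMap.ker f).mkQ := by
        rw [LinearMap.comp_assoc, LinearMap.comp_assoc, Submodule.liftQ_mkQ]
    _ = g := by rw [hl, LinearMap.id_comp, Submodule.liftQ_mkQ]

theorem rank_lt_rank_of_ker_mulVecLin_lt {𝕜 m n : Type*} [Field 𝕜] [Fintype n]
    {A B : Matrix m n 𝕜} (h : LinearMap.ker A.mulVecLin < LinearMap.ker B.mulVecLin) :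
    B.rank < A.rank := by
  have hker := Submodule.finrank_lt_finrank_of_lt h
  have hA := LinearMap.finrank_range_add_finrank_ker A.mulVecLin
  have hB := LinearMap.finrank_range_add_finrank_ker B.mulVecLin
  rw [Matrix.rank, Matrix.rank]
  lia

section LoewnerOrder

open scoped MatrixOrder
open Filter Topology

variable {𝕜 m : Type*} [RCLike 𝕜]

theorem isClosed_setOf_posSemidef : IsClosed {A : Matrix m m 𝕜 | A.PosSemidef} := by
  simp only [PosSemidef, Finsupp.sum, Set.ofPred_and, Set.ofPred_forall]
  exact (isClosed_eq (by fun_prop) continuous_id).inter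
    (isClosed_iInter fun v => isClosed_le continuous_const (by fun_prop))

theorem exists_pos_le_smul_one_of_isHermitian [Finite m] [DecidableEq m] {A : Matrix m m 𝕜}
    (hA : A.IsHermitian) : ∃ c : ℝ, 0 < c ∧ A ≤ c • (1 : Matrix m m 𝕜) := by
  have := Fintype.ofFinite m
  obtain ⟨c, hc⟩ := A.finite_real_spectrum.bddAbove
  refine ⟨max c 1, by positivity, ?_⟩
  rw [← Algebra.algebraMap_eq_smul_one]
  exact le_algebraMap_of_spectrum_le (fun r hr => (hc hr).trans (le_max_left _ _))
    hA.isSelfAdjoint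

variable [Fintype m]

theorem eventually_smul_le_of_ker_le_ker {A B : Matrix m m 𝕜} (hA : 0 ≤ A) (hB : 0 ≤ B)
    (hker : LinearMap.ker A.mulVecLin ≤ LinearMap.ker B.mulVecLin) :
    ∀ᶠ ε : ℝ in 𝓝[>] 0, ε • B ≤ A := by
  classical
  obtain ⟨R, rfl⟩ := CStarAlgebra.nonneg_iff_eq_star_mul_self.mp hA
  obtain ⟨N, rfl⟩ := CStarAlgebra.nonneg_iff_eq_star_mul_self.mp hB
  simp only [star_eq_conjTranspose, ker_mulVecLin_conjTranspose_mul_self] at hker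
  obtain ⟨T, rfl⟩ : ∃ T : Matrix m m 𝕜, T * R = N := by
    obtain ⟨k, hk⟩ := exists_comp_eq_of_ker_le_ker R.toLin' N.toLin' hker
    refine ⟨LinearMap.toMatrix' k, toLin'.injective ?_⟩
    rw [toLin'_mul, toLin'_toMatrix', hk]
  obtain ⟨c, hc, hTc⟩ := exists_pos_le_smul_one_of_isHermitian
    (isHermitian_conjTranspose_mul_self T)
  filter_upwards [Ioc_mem_nhdsGT (inv_pos.mpr hc)] with ε hε
  have hT : ε • (star T * T) ≤ 1 := calc
    ε • (star T * T) ≤ ε • c • (1 : Matrix m m 𝕜) := smul_le_smul_of_nonneg_left hTc hε.1.le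
    _ = (ε * c) • (1 : Matrix m m 𝕜) := smul_smul _ _ _
    _ ≤ (1 : ℝ) • (1 : Matrix m m 𝕜) :=
      smul_le_smul_of_nonneg_right ((le_mul_inv_iff₀ hc).mp (by simpa using hε.2)) zero_le_one
    _ = 1 := one_smul _ _
  simpa [mul_assoc] using star_left_conjugate_le_conjugate hT R

theorem exists_smul_le_rank_sub_lt {A B : Matrix m m 𝕜} (hA : 0 ≤ A) (hB : 0 ≤ B)
    (hker : LinearMap.ker A.mulVecLin ≤ LinearMap.ker B.mulVecLin) (hBA : ¬ B ≤ A) :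
    ∃ t ∈ Set.Ioo (0 : ℝ) 1, t • B ≤ A ∧ (A - t • B).rank < A.rank := by
  have hclosed : IsClosed {t : ℝ | t • B ≤ A} :=
    isClosed_setOf_posSemidef.preimage (f := fun t : ℝ => A - t • B) (by fun_prop)
  obtain ⟨t, ⟨ht, htA⟩, hmax⟩ := (isCompact_Icc.inter_right hclosed).exists_isGreatest
    ⟨0, Set.left_mem_Icc.mpr zero_le_one, by simpa using hA⟩
  have ht1 : t < 1 := ht.2.lt_of_ne fun h => hBA (by simpa [h] using htA)
  have ht0 : 0 < t := by
    obtain ⟨ε, hεA, hε⟩ := ((eventually_smul_le_of_ker_le_ker hA hB hker).and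
      (Ioo_mem_nhdsGT zero_lt_one)).exists
    exact hε.1.trans_le (hmax ⟨Set.Ioo_subset_Icc_self hε, hεA⟩)
  refine ⟨t, ⟨ht0, ht1⟩, htA, rank_lt_rank_of_ker_mulVecLin_lt (lt_of_le_not_ge ?_ ?_)⟩
  · intro v hv
    have hBv := hker hv
    simp only [LinearMap.mem_ker, mulVecLin_apply] at hv hBv ⊢
    rw [sub_mulVec, smul_mulVec, hv, hBv, smul_zero, sub_zero]
  · intro hle
    obtain ⟨δ, hδA, hδ⟩ := ((eventually_smul_le_of_ker_le_ker (sub_nonneg.mpr htA) hB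
      (hle.trans hker)).and (Ioo_mem_nhdsGT (sub_pos.mpr ht1))).exists
    have hmem : t + δ ≤ t := hmax ⟨⟨by linarith [hδ.1], by linarith [hδ.2]⟩, by
      simpa only [Set.mem_ofPred_eq, add_smul] using le_sub_iff_add_le'.mp hδA⟩
    linarith [hδ.1]

end LoewnerOrder

section Choi

open scoped MatrixOrder

variable {m n k : ℕ}

theorem sandwich_apply (A : Matrix (Fin m) (Fin n) ℂ) (ρ : Matrix (Fin n) (Fin n) ℂ) :
    sandwich A ρ = A * ρ * Aᴴ :=
  rfl

theorem sandwich_mul (A : Matrix (Fin k) (Fin m) ℂ) (B : Matrix (Fin m) (Fin n) ℂ) :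
    sandwich (A * B) = sandwich A ∘ₗ sandwich B := by
  ext1 ρ
  simp only [LinearMap.comp_apply, sandwich_apply, conjTranspose_mul, Matrix.mul_assoc]

theorem sandwich_ofReal_smul (c : ℝ) (A : Matrix (Fin m) (Fin n) ℂ) :
    sandwich ((c : ℂ) • A) = (c ^ 2) • sandwich A := by
  ext1 ρ
  simp [sandwich_apply, smul_smul, sq]

theorem sandwich_vecMulVec_apply (y : Fin m → ℂ) (x : Fin n → ℂ) (ρ : Matrix (Fin n) (Fin n) ℂ) :
    sandwich (vecMulVec y (star x)) ρ = (star x ⬝ᵥ ρ *ᵥ x) • vecMulVec y (star y) := by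
  rw [sandwich_apply, conjTranspose_vecMulVec, star_star, Matrix.mul_assoc, mul_vecMulVec,
    vecMulVec_mul_vecMulVec, vecMulVec_smul]

variable (Φ Θ : Matrix (Fin m) (Fin m) ℂ →ₗ[ℂ] Matrix (Fin k) (Fin k) ℂ)

theorem Choi_apply (p q : Fin m × Fin k) : Choi Φ p q = Φ (single p.1 q.1 1) p.2 q.2 := by
  simp [Choi, Matrix.sum_apply, single_apply, ite_and]

theorem Choi_sub : Choi (Φ - Θ) = Choi Φ - Choi Θ := by
  ext p q
  simp only [Choi_apply, LinearMap.sub_apply, Matrix.sub_apply]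

theorem Choi_smul (c : ℝ) : Choi (c • Φ) = c • Choi Φ := by
  ext p q
  simp only [Choi_apply, LinearMap.smul_apply, Matrix.smul_apply]

theorem map_apply_eq_sum_Choi (ρ : Matrix (Fin m) (Fin m) ℂ) (a b : Fin k) :
    Φ ρ a b = ∑ p, ∑ q, ρ p q * Choi Φ (p, a) (q, b) := by
  conv_lhs => rw [matrix_eq_sum_single ρ]
  simp only [map_sum, Matrix.sum_apply, Choi_apply]
  refine Finset.sum_congr rfl fun p _ => Finset.sum_congr rfl fun q _ => ?_
  rw [← mul_one (ρ p q), ← smul_eq_mul, ← smul_single, map_smul, Matrix.smul_apply, smul_eq_mul,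
    smul_eq_mul, mul_one]

theorem Choi_comp_sandwich (A : Matrix (Fin m) (Fin n) ℂ) :
    Choi (Φ ∘ₗ sandwich A) =
      (Aᵀ ⊗ₖ (1 : Matrix (Fin k) (Fin k) ℂ)) * Choi Φ *
        (Aᵀ ⊗ₖ (1 : Matrix (Fin k) (Fin k) ℂ))ᴴ := by
  ext ⟨j, a⟩ ⟨l, b⟩
  have hsandwich (p q : Fin m) : sandwich A (single j l 1) p q = A p j * star (A q l) := by
    simp [sandwich_apply, mul_apply, single_apply, ite_and]
  rw [Choi_apply, LinearMap.comp_apply, map_apply_eq_sum_Choi]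
  simp only [hsandwich, mul_apply, Fintype.sum_prod_type, kroneckerMap_apply,
    conjTranspose_apply, transpose_apply, one_apply, apply_ite star, star_zero, mul_ite, mul_one,
    mul_zero, ite_mul, zero_mul, Finset.sum_ite_eq, Finset.mem_univ, if_true, Finset.sum_mul]
  rw [Finset.sum_comm]
  exact Finset.sum_congr rfl fun q _ => Finset.sum_congr rfl fun p _ => mul_right_comm _ _ _

theorem rank_Choi_comp_sandwich_le (A : Matrix (Fin m) (Fin n) ℂ) :
    (Choi (Φ ∘ₗ sandwich A)).rank ≤ (Choi Φ).rank := by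
  rw [Choi_comp_sandwich]
  exact (rank_mul_le_left _ _).trans (rank_mul_le_right _ _)

theorem Choi_comp_sandwich_vecMulVec (y : Fin m → ℂ) (x : Fin n → ℂ) :
    Choi (Φ ∘ₗ sandwich (vecMulVec y (star x))) =
      vecMulVec (star x) x ⊗ₖ Φ (vecMulVec y (star y)) := by
  ext ⟨j, a⟩ ⟨l, b⟩
  have hsingle : star x ⬝ᵥ single j l 1 *ᵥ x = star (x j) * x l := by
    simp [dotProduct, mulVec, single_apply, ite_and]
  simp [Choi_apply, sandwich_vecMulVec_apply, hsingle, vecMulVec_apply]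

variable {Φ Θ}

theorem posSemidef_Choi_comp_sandwich (hΦ : (Choi Φ).PosSemidef) (A : Matrix (Fin m) (Fin n) ℂ) :
    (Choi (Φ ∘ₗ sandwich A)).PosSemidef := by
  rw [Choi_comp_sandwich]
  exact hΦ.mul_mul_conjTranspose_same _

theorem posSemidef_map_one_of_posSemidef_Choi (hΦ : (Choi Φ).PosSemidef) : (Φ 1).PosSemidef := by
  have hsum : Φ 1 = ∑ j, (Choi Φ).submatrix (j, ·) (j, ·) := by
    ext a b
    simp [map_apply_eq_sum_Choi, one_apply, Matrix.sum_apply]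
  rw [hsum]
  exact posSemidef_sum _ fun j _ => hΦ.submatrix _

theorem posSemidef_map_of_posSemidef_Choi (hΦ : (Choi Φ).PosSemidef)
    {ρ : Matrix (Fin m) (Fin m) ℂ} (hρ : ρ.PosSemidef) : (Φ ρ).PosSemidef := by
  obtain ⟨R, rfl⟩ := CStarAlgebra.nonneg_iff_eq_mul_star_self.mp hρ.nonneg
  simpa [sandwich_apply, star_eq_conjTranspose] using
    posSemidef_map_one_of_posSemidef_Choi (posSemidef_Choi_comp_sandwich hΦ R)

theorem map_le_map_of_Choi_le_Choi (hle : Choi Θ ≤ Choi Φ) {ρ : Matrix (Fin m) (Fin m) ℂ}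
    (hρ : ρ.PosSemidef) : Θ ρ ≤ Φ ρ := by
  rw [le_iff, ← Choi_sub] at hle
  exact posSemidef_map_of_posSemidef_Choi hle hρ

section Kraus

variable {ι : Type*} [Fintype ι] {K : ι → Matrix (Fin k) (Fin m) ℂ}

theorem Choi_eq_mul_conjTranspose_of_kraus (hK : ∀ ρ, Φ ρ = ∑ j, K j * ρ * (K j)ᴴ) :
    Choi Φ = (of fun p j => (K j).vec p) * (of fun p j => (K j).vec p)ᴴ := by
  ext ⟨j, a⟩ ⟨l, b⟩
  simp [Choi_apply, hK, Matrix.vec, mul_apply, Matrix.sum_apply, single_apply, ite_and]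

theorem posSemidef_Choi_of_kraus (hK : ∀ ρ, Φ ρ = ∑ j, K j * ρ * (K j)ᴴ) :
    (Choi Φ).PosSemidef := by
  rw [Choi_eq_mul_conjTranspose_of_kraus hK]
  exact posSemidef_self_mul_conjTranspose _

theorem Choi_mulVec_vec_eq_zero_iff_of_kraus (hK : ∀ ρ, Φ ρ = ∑ j, K j * ρ * (K j)ᴴ)
    {Z : Matrix (Fin k) (Fin m) ℂ} :
    Choi Φ *ᵥ Z.vec = 0 ↔ ∀ j, ((K j)ᴴ * Z).trace = 0 := by
  rw [Choi_eq_mul_conjTranspose_of_kraus hK, self_mul_conjTranspose_mulVec_eq_zero, funext_iff]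
  simp only [← star_vec_dotProduct_vec]
  rfl

end Kraus

theorem Choi_comp_sandwich_vecMulVec_mulVec_vec_eq_zero {x : Fin n → ℂ} {y : Fin m → ℂ}
    {Z : Matrix (Fin k) (Fin n) ℂ} (hZ : (Φ (vecMulVec y (star y)) * Z) *ᵥ x = 0) :
    Choi (Φ ∘ₗ sandwich (vecMulVec y (star x))) *ᵥ Z.vec = 0 := by
  rw [Choi_comp_sandwich_vecMulVec, kronecker_mulVec_vec, transpose_vecMulVec, mul_vecMulVec, hZ,
    zero_vecMulVec, vec_zero]

end Choi

section PsiInv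

variable {n : ℕ} {lam : ℝ} {x : Fin n → ℂ}

theorem det_Kmat (hx : star x ⬝ᵥ x = 1) : (Kmat lam x).det = (√(1 - lam) : ℝ) := by
  rw [Kmat, ← smul_vecMulVec, vecMulVec_eq Unit, det_one_sub_mul_comm, det_unique]
  simp [replicateRow_mul_replicateCol_apply, hx]

theorem vecMulVec_mul_Kmat {m : ℕ} (hx : star x ⬝ᵥ x = 1) (y : Fin m → ℂ) :
    vecMulVec y (star x) * Kmat lam x = ((√(1 - lam) : ℝ) : ℂ) • vecMulVec y (star x) := by
  rw [Kmat, Matrix.mul_sub, Matrix.mul_one, Matrix.mul_smul, vecMulVec_mul_vecMulVec, hx, one_smul]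
  push_cast
  rw [sub_smul, one_smul, sub_sub_cancel]

theorem sandwich_vecMulVec_comp_sandwich_inv_Kmat {m : ℕ} (hlam : lam < 1)
    (hx : star x ⬝ᵥ x = 1) (y : Fin m → ℂ) :
    sandwich (vecMulVec y (star x)) ∘ₗ sandwich (Kmat lam x)⁻¹ =
      (1 - lam)⁻¹ • sandwich (vecMulVec y (star x)) := by
  have hs : √(1 - lam) ≠ 0 := (Real.sqrt_pos.mpr (sub_pos.mpr hlam)).ne'
  have hK : IsUnit (Kmat lam x).det := by
    rw [det_Kmat hx]
    exact isUnit_iff_ne_zero.mpr (Complex.ofReal_ne_zero.mpr hs)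
  have hV : vecMulVec y (star x) * (Kmat lam x)⁻¹ =
      (((√(1 - lam))⁻¹ : ℝ) : ℂ) • vecMulVec y (star x) := by
    calc vecMulVec y (star x) * (Kmat lam x)⁻¹
        = (((√(1 - lam))⁻¹ : ℝ) : ℂ) •
            (vecMulVec y (star x) * Kmat lam x * (Kmat lam x)⁻¹) := by
          rw [vecMulVec_mul_Kmat hx, Matrix.smul_mul, smul_smul, ← Complex.ofReal_mul,
            inv_mul_cancel₀ hs, Complex.ofReal_one, one_smul]
      _ = (((√(1 - lam))⁻¹ : ℝ) : ℂ) • vecMulVec y (star x) := by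
          rw [mul_nonsing_inv_cancel_right _ _ hK]
  rw [← sandwich_mul, hV, sandwich_ofReal_smul, inv_pow, Real.sq_sqrt (sub_pos.mpr hlam).le]

theorem PsiInv_eq_id_sub_comp (h0 : 0 ≤ lam) (h1 : lam < 1) (hx : star x ⬝ᵥ x = 1)
    (y : Fin n → ℂ) :
    PsiInv lam x y = (LinearMap.id - lam • sandwich (vecMulVec y (star x))) ∘ₗ
      sandwich (Kmat lam x)⁻¹ := by
  rw [PsiInv, Lmat, sandwich_ofReal_smul, Real.sq_sqrt h0, LinearMap.sub_comp, LinearMap.id_comp,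
    LinearMap.smul_comp, sandwich_vecMulVec_comp_sandwich_inv_Kmat h1 hx, smul_comm lam]
  rfl

end PsiInv

section RankDrop

open scoped MatrixOrder

theorem IsTP.not_le_of_trace_eq {n : ℕ}
    {Φ : Matrix (Fin n) (Fin n) ℂ →ₗ[ℂ] Matrix (Fin n) (Fin n) ℂ} (hΦ : IsTP Φ)
    {ρ σ : Matrix (Fin n) (Fin n) ℂ} (htrace : ρ.trace = σ.trace) (hne : Φ ρ ≠ Φ σ) :
    ¬ Φ σ ≤ Φ ρ := fun hle =>
  hne (sub_eq_zero.mp ((le_iff.mp hle).trace_eq_zero_iff.mp (by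
    rw [trace_sub, hΦ, hΦ, htrace, sub_self])))

theorem sufficient_criterion_rank_drop_general {m n : ℕ} {ι : Type*} [Fintype ι]
    {K : ι → Matrix (Fin m) (Fin n) ℂ}
    {Φ : Matrix (Fin n) (Fin n) ℂ →ₗ[ℂ] Matrix (Fin m) (Fin m) ℂ}
    (hK : ∀ ρ, Φ ρ = ∑ j, K j * ρ * (K j)ᴴ) {x y : Fin n → ℂ} (hx : star x ⬝ᵥ x = 1)
    (hker : ∀ Z : Matrix (Fin m) (Fin n) ℂ, (∀ j, ((K j)ᴴ * Z).trace = 0) →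
      (Φ (vecMulVec y (star y)) * Z) *ᵥ x = 0)
    (hnle : ¬ Φ (vecMulVec y (star y)) ≤ Φ (vecMulVec x (star x))) :
    ∃ lam ∈ Set.Ioo (0 : ℝ) 1, (Choi (Φ ∘ₗ PsiInv lam x y)).PosSemidef ∧
      (Choi (Φ ∘ₗ PsiInv lam x y)).rank < (Choi Φ).rank := by
  set Θ := Φ ∘ₗ sandwich (vecMulVec y (star x)) with hΘ
  have hΦ : (Choi Φ).PosSemidef := posSemidef_Choi_of_kraus hK
  have hkerΘ : LinearMap.ker (Choi Φ).mulVecLin ≤ LinearMap.ker (Choi Θ).mulVecLin := by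
    intro v hv
    obtain ⟨Z, rfl⟩ := vec_bijective.surjective v
    exact Choi_comp_sandwich_vecMulVec_mulVec_vec_eq_zero
      (hker Z ((Choi_mulVec_vec_eq_zero_iff_of_kraus hK).mp hv))
  have hΘx : Θ (vecMulVec x (star x)) = Φ (vecMulVec y (star y)) := by
    rw [hΘ, LinearMap.comp_apply, sandwich_vecMulVec_apply, vecMulVec_mulVec, hx]
    simp [hx]
  have hΘΦ : ¬ Choi Θ ≤ Choi Φ := fun hle =>
    hnle (hΘx ▸ map_le_map_of_Choi_le_Choi hle (posSemidef_vecMulVec_self_star x))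
  obtain ⟨lam, hlam, hle, hrank⟩ := exists_smul_le_rank_sub_lt hΦ.nonneg
    (posSemidef_Choi_comp_sandwich hΦ _).nonneg hkerΘ hΘΦ
  have hcomp : Φ ∘ₗ PsiInv lam x y = (Φ - lam • Θ) ∘ₗ sandwich (Kmat lam x)⁻¹ := by
    rw [PsiInv_eq_id_sub_comp hlam.1.le hlam.2 hx, ← LinearMap.comp_assoc, LinearMap.comp_sub,
      LinearMap.comp_id, LinearMap.comp_smul]
  have hChoi : Choi (Φ - lam • Θ) = Choi Φ - lam • Choi Θ := by rw [Choi_sub, Choi_smul]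
  refine ⟨lam, hlam, ?_, ?_⟩ <;> rw [hcomp]
  · exact posSemidef_Choi_comp_sandwich (hChoi ▸ hle) _
  · exact (rank_Choi_comp_sandwich_le _ _).trans_lt (hChoi ▸ hrank)

end RankDrop

/-- under the sufficient criterion, if moreover `Φ(xx†) ≠ Φ(x⊥x⊥†)`, the
Kraus rank can be strictly decreased. -/
theorem sufficient_criterion_rank_drop (n r : ℕ) (K : Fin r → Matrix (Fin n) (Fin n) ℂ)
    (Φ : Matrix (Fin n) (Fin n) ℂ →ₗ[ℂ] Matrix (Fin n) (Fin n) ℂ)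
    (hKraus : ∀ ρ, Φ ρ = ∑ j, K j * ρ * (K j)ᴴ) (hΦ : IsChannel Φ)
    (x xp : Fin n → ℂ)
    (hx : star x ⬝ᵥ x = 1) (hxp : star xp ⬝ᵥ xp = 1) (horth : star x ⬝ᵥ xp = 0)
    (hcond : ∀ Z : Matrix (Fin n) (Fin n) ℂ, (∀ j, ((K j)ᴴ * Z).trace = 0) →
      (Φ (Matrix.vecMulVec xp (star xp)) * Z) *ᵥ x = 0 ∧
      (Φ (Matrix.vecMulVec x (star x)) * Z) *ᵥ x = 0)
    (hneq : Φ (Matrix.vecMulVec x (star x)) ≠ Φ (Matrix.vecMulVec xp (star xp))) :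
    ∃ lam ∈ Set.Ioo (0 : ℝ) 1, IsCP (Φ ∘ₗ PsiInv lam x xp) ∧
      (Choi (Φ ∘ₗ PsiInv lam x xp)).rank < (Choi Φ).rank :=
  sufficient_criterion_rank_drop_general hKraus hx (fun Z hZ => (hcond Z hZ).1)
    (hΦ.2.not_le_of_trace_eq (by simp [trace_vecMulVec, dotProduct_comm _ (star _), hx, hxp]) hneq)

end
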